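/- Lipschitz subspace score implies Lipschitz full score: if for some t ≥ 0 the map y ↦ ∇ log p_t^fac(y) is L-Lipschitz on ℝ^k, then r ↦ ∇ log p_t(r) is Lipschitz on ℝ^d with constant at most L·((h_t + σ_1² α_t²)/(h_t + σ_d² α_t²))² + 1/(h_t + σ_d² α_t²). -/

import Mathlib

open MeasureTheory Matrix

noncomputable section

/-- Euclidean (ℓ²) norm on `Fin n → ℝ`. -/
def eucNorm {n : ℕ} (x : Fin n → ℝ) : ℝ := Real.sqrt (∑ i, x i ^ 2)

/-- The `n`-dimensional Gaussian density `φ(x; μ, S)`. -/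
def gaussD (n : ℕ) (x μ : Fin n → ℝ) (S : Matrix (Fin n) (Fin n) ℝ) : ℝ :=
  (2 * Real.pi) ^ (-(n : ℝ) / 2) * S.det ^ (-(1 : ℝ) / 2) *
    Real.exp (-((x - μ) ⬝ᵥ (S⁻¹ *ᵥ (x - μ))) / 2)

/-- Gradient as the vector of partial derivatives. -/
def gradv {n : ℕ} (f : (Fin n → ℝ) → ℝ) (x : Fin n → ℝ) : Fin n → ℝ :=
  fun i => fderiv ℝ f x (Pi.single i 1)

/-- `α_t = e^{-t/2}`. -/
def af (t : ℝ) : ℝ := Real.exp (-t / 2)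

/-- `h_t = 1 - α_t²`. -/
def hf (t : ℝ) : ℝ := 1 - af t ^ 2

/-- `Λ_t = diag(h_t + σ_i² α_t²)`. -/
def Lam {d : ℕ} (σ : Fin d → ℝ) (t : ℝ) : Matrix (Fin d) (Fin d) ℝ :=
  Matrix.diagonal fun i => hf t + σ i ^ 2 * af t ^ 2

/-- `Λ_t^{-1/2}`. -/
def LamInvSqrt {d : ℕ} (σ : Fin d → ℝ) (t : ℝ) : Matrix (Fin d) (Fin d) ℝ :=
  Matrix.diagonal fun i => (Real.sqrt (hf t + σ i ^ 2 * af t ^ 2))⁻¹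

/-- `Γ_t = (βᵀ Λ_t⁻¹ β)⁻¹`. -/
def Gam {d k : ℕ} (β : Matrix (Fin d) (Fin k) ℝ) (σ : Fin d → ℝ) (t : ℝ) :
    Matrix (Fin k) (Fin k) ℝ :=
  (βᵀ * (Lam σ t)⁻¹ * β)⁻¹

/-- `T_t = Λ_t^{-1/2} β Γ_t βᵀ Λ_t^{-1/2}`. -/
def Tproj {d k : ℕ} (β : Matrix (Fin d) (Fin k) ℝ) (σ : Fin d → ℝ) (t : ℝ) :
    Matrix (Fin d) (Fin d) ℝ :=
  LamInvSqrt σ t * β * Gam β σ t * βᵀ * LamInvSqrt σ t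

/-- Time-`t` marginal density `p_t`. -/
def pT {d k : ℕ} (β : Matrix (Fin d) (Fin k) ℝ) (σ : Fin d → ℝ)
    (pfac : (Fin k → ℝ) → ℝ) (t : ℝ) (r : Fin d → ℝ) : ℝ :=
  ∫ f : Fin k → ℝ, gaussD d r (af t • (β *ᵥ f)) (Lam σ t) * pfac f

/-- Smoothed factor density `p_t^fac`. -/
def pTfac {d k : ℕ} (β : Matrix (Fin d) (Fin k) ℝ) (σ : Fin d → ℝ)
    (pfac : (Fin k → ℝ) → ℝ) (t : ℝ) (y : Fin k → ℝ) : ℝ :=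
  ∫ f : Fin k → ℝ, gaussD k y (af t • f) (Gam β σ t) * pfac f

/-! ### Euclidean norm -/

theorem eucNorm_eq {n : ℕ} (x : Fin n → ℝ) : eucNorm x = ‖WithLp.toLp 2 x‖ := by
  simp [eucNorm, EuclideanSpace.norm_eq]

theorem eucNorm_nonneg' {n : ℕ} (x : Fin n → ℝ) : 0 ≤ eucNorm x := Real.sqrt_nonneg _

theorem eucNorm_sq' {n : ℕ} (x : Fin n → ℝ) : eucNorm x ^ 2 = x ⬝ᵥ x := by
  rw [eucNorm, Real.sq_sqrt (Finset.sum_nonneg fun i _ => sq_nonneg _)]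
  simp [dotProduct, sq]

theorem eucNorm_sub_le {n : ℕ} (x y : Fin n → ℝ) : eucNorm (x - y) ≤ eucNorm x + eucNorm y := by
  simp only [eucNorm_eq, WithLp.toLp_sub]
  exact norm_sub_le _ _

theorem dot_le_eucNorm {n : ℕ} (x y : Fin n → ℝ) : x ⬝ᵥ y ≤ eucNorm x * eucNorm y := by
  simp only [eucNorm, dotProduct]
  exact Real.sum_mul_le_sqrt_mul_sqrt _ _ _

theorem norm_le_eucNorm {n : ℕ} (x : Fin n → ℝ) : ‖x‖ ≤ eucNorm x := by
  refine (pi_norm_le_iff_of_nonneg (eucNorm_nonneg' x)).2 fun i => ?_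
  rw [Real.norm_eq_abs, eucNorm]
  refine Real.abs_le_sqrt ?_
  exact Finset.single_le_sum (f := fun i => x i ^ 2) (fun i _ => sq_nonneg _) (Finset.mem_univ i)

/-- from `c * N² ≤ M * N` deduce `c * N ≤ M`. -/
theorem le_of_sq_le' {c N M : ℝ} (hN : 0 ≤ N) (hM : 0 ≤ M) (h : c * N ^ 2 ≤ M * N) :
    c * N ≤ M := by
  rcases hN.eq_or_lt with h0 | h0
  · rw [← h0]; simpa using hM
  · by_contra hc
    push Not at hc
    nlinarith

/-! ### Linear algebra -/

section LA
variable {d k : ℕ} (β : Matrix (Fin d) (Fin k) ℝ) (l : Fin d → ℝ)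

/-- inverse of the diagonal. -/
def Di : Matrix (Fin d) (Fin d) ℝ := Matrix.diagonal fun i => (l i)⁻¹

/-- precision of the projected noise. -/
def GG : Matrix (Fin k) (Fin k) ℝ := βᵀ * Di l * β

/-- the projection map `r ↦ y`. -/
def AA : Matrix (Fin k) (Fin d) ℝ := (GG β l)⁻¹ * βᵀ * Di l

/-- the residual precision. -/
def MM : Matrix (Fin d) (Fin d) ℝ := Di l - Di l * β * AA β l

variable {β l}

theorem Di_T : (Di l)ᵀ = Di l := by simp [Di]

theorem beta_inj (hβ : βᵀ * β = 1) : Function.Injective β.mulVec := by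
  intro x y h
  have := congrArg (βᵀ.mulVec) h
  simpa [Matrix.mulVec_mulVec, hβ] using this

theorem GG_posDef (hβ : βᵀ * β = 1) (hl : ∀ i, 0 < l i) : (GG β l).PosDef := by
  have h : (Di l).PosDef := Matrix.PosDef.diagonal fun i => inv_pos.2 (hl i)
  have := h.conjTranspose_mul_mul_same (B := β) (beta_inj hβ)
  simpa [GG, Matrix.conjTranspose_eq_transpose_of_trivial] using this

theorem GG_T : (GG β l)ᵀ = GG β l := by
  simp [GG, Matrix.transpose_mul, Di_T, Matrix.mul_assoc]

theorem GG_unit (hβ : βᵀ * β = 1) (hl : ∀ i, 0 < l i) : IsUnit (GG β l).det :=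
  (GG_posDef hβ hl).det_pos.ne'.isUnit

theorem GG_mul_AA (hβ : βᵀ * β = 1) (hl : ∀ i, 0 < l i) : GG β l * AA β l = βᵀ * Di l := by
  rw [AA, Matrix.mul_assoc, ← Matrix.mul_assoc, Matrix.mul_nonsing_inv _ (GG_unit hβ hl),
    Matrix.one_mul]

theorem AA_T : (AA β l)ᵀ = Di l * β * (GG β l)⁻¹ := by
  simp [AA, Matrix.transpose_mul, Matrix.transpose_nonsing_inv, GG_T, Di_T, Matrix.mul_assoc]

theorem MM_T : (MM β l)ᵀ = MM β l := by
  rw [MM, Matrix.transpose_sub, Matrix.transpose_mul, AA_T, Matrix.transpose_mul, Di_T, AA]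
  simp [Matrix.mul_assoc]

theorem betaT_MM (hβ : βᵀ * β = 1) (hl : ∀ i, 0 < l i) : βᵀ * MM β l = 0 := by
  rw [MM, Matrix.mul_sub, ← Matrix.mul_assoc, ← Matrix.mul_assoc, ← GG, GG_mul_AA hβ hl, sub_self]

theorem D_mul_Di (hl : ∀ i, 0 < l i) : Matrix.diagonal l * Di l = 1 := by
  rw [Di, Matrix.diagonal_mul_diagonal]
  simp [fun i => (hl i).ne']

theorem MDM (hβ : βᵀ * β = 1) (hl : ∀ i, 0 < l i) :
    MM β l * Matrix.diagonal l * MM β l = MM β l := by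
  have h1 : Matrix.diagonal l * MM β l = 1 - β * AA β l := by
    rw [MM, Matrix.mul_sub, Matrix.mul_assoc (Di l), ← Matrix.mul_assoc, D_mul_Di hl,
      Matrix.one_mul]
  have h2 : MM β l * β = 0 := by
    have := congrArg Matrix.transpose (betaT_MM (β := β) hβ hl)
    simpa [Matrix.transpose_mul, MM_T] using this
  rw [Matrix.mul_assoc, h1, Matrix.mul_sub, ← Matrix.mul_assoc, h2]
  simp

theorem dot_T {m n : ℕ} (A : Matrix (Fin m) (Fin n) ℝ) (x : Fin m → ℝ) (y : Fin n → ℝ) :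
    x ⬝ᵥ A *ᵥ y = (Aᵀ *ᵥ x) ⬝ᵥ y := by
  rw [dotProduct_comm (Aᵀ *ᵥ x), Matrix.dotProduct_transpose_mulVec]

theorem MM_bound (hβ : βᵀ * β = 1) (hl : ∀ i, 0 < l i) {a : ℝ} (hal : ∀ i, a ≤ l i)
    (r : Fin d → ℝ) : a * eucNorm (MM β l *ᵥ r) ≤ eucNorm r := by
  refine le_of_sq_le' (eucNorm_nonneg' _) (eucNorm_nonneg' _) ?_
  refine le_trans ?_ (dot_le_eucNorm _ _)
  have h : r ⬝ᵥ MM β l *ᵥ r = (MM β l *ᵥ r) ⬝ᵥ Matrix.diagonal l *ᵥ (MM β l *ᵥ r) := by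
    conv_lhs => rw [← MDM hβ hl, Matrix.mul_assoc, ← Matrix.mulVec_mulVec, dot_T, MM_T,
      ← Matrix.mulVec_mulVec]
  rw [h, eucNorm_sq']
  simp only [dotProduct, Matrix.mulVec_diagonal, Finset.mul_sum]
  refine Finset.sum_le_sum fun i _ => ?_
  nlinarith [hal i, mul_self_nonneg ((MM β l *ᵥ r) i)]

theorem eucNorm_beta (hβ : βᵀ * β = 1) (y : Fin k → ℝ) : eucNorm (β *ᵥ y) = eucNorm y := by
  have : eucNorm (β *ᵥ y) ^ 2 = eucNorm y ^ 2 := by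
    rw [eucNorm_sq', eucNorm_sq', dot_T, Matrix.mulVec_mulVec, hβ, Matrix.one_mulVec]
  exact (sq_eq_sq₀ (eucNorm_nonneg' _) (eucNorm_nonneg' _)).1 this

theorem Di_bound {a : ℝ} (ha : 0 < a) (hal : ∀ i, a ≤ l i) (r : Fin d → ℝ) :
    eucNorm (Di l *ᵥ r) ≤ eucNorm r / a := by
  rw [eucNorm, eucNorm]
  refine Real.sqrt_le_iff.2 ⟨by positivity, ?_⟩
  rw [div_pow, Real.sq_sqrt (Finset.sum_nonneg fun i _ => sq_nonneg _), Finset.sum_div]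
  refine Finset.sum_le_sum fun i _ => ?_
  rw [Di, Matrix.mulVec_diagonal, mul_pow, inv_pow, div_eq_inv_mul]
  have := hal i
  gcongr

theorem AA_bound (hβ : βᵀ * β = 1) {a b : ℝ} (ha : 0 < a) (hal : ∀ i, a ≤ l i)
    (hb : 0 < b) (hlb : ∀ i, l i ≤ b) (r : Fin d → ℝ) :
    eucNorm (AA β l *ᵥ r) ≤ b / a * eucNorm r := by
  have hl : ∀ i, 0 < l i := fun i => ha.trans_le (hal i)
  set y := AA β l *ᵥ r with hy
  have hGy : GG β l *ᵥ y = βᵀ *ᵥ (Di l *ᵥ r) := by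
    rw [hy, Matrix.mulVec_mulVec, GG_mul_AA hβ hl, Matrix.mulVec_mulVec]
  have h1 : y ⬝ᵥ GG β l *ᵥ y = (β *ᵥ y) ⬝ᵥ (Di l *ᵥ r) := by
    rw [hGy, dot_T, Matrix.transpose_transpose]
  have h2 : y ⬝ᵥ GG β l *ᵥ y = (β *ᵥ y) ⬝ᵥ (Di l *ᵥ (β *ᵥ y)) := by
    rw [GG, ← Matrix.mulVec_mulVec, ← Matrix.mulVec_mulVec, dot_T, Matrix.transpose_transpose]
  have h3 : b⁻¹ * eucNorm y ^ 2 ≤ (β *ᵥ y) ⬝ᵥ (Di l *ᵥ (β *ᵥ y)) := by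
    rw [← eucNorm_beta hβ y, eucNorm_sq']
    simp only [dotProduct, Di, Matrix.mulVec_diagonal, Finset.mul_sum]
    refine Finset.sum_le_sum fun i _ => ?_
    have : b⁻¹ ≤ (l i)⁻¹ := inv_anti₀ (hl i) (hlb i)
    nlinarith [mul_self_nonneg ((β *ᵥ y) i)]
  have h4 : b⁻¹ * eucNorm y ^ 2 ≤ eucNorm r / a * eucNorm y := by
    calc _ ≤ _ := h3
      _ = _ := h2.symm.trans h1
      _ ≤ _ := dot_le_eucNorm _ _
      _ ≤ eucNorm y * (eucNorm r / a) := by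
        rw [eucNorm_beta hβ]
        exact mul_le_mul_of_nonneg_left (Di_bound ha hal r) (eucNorm_nonneg' _)
      _ = _ := mul_comm _ _
  have h5 := le_of_sq_le' (eucNorm_nonneg' _) (div_nonneg (eucNorm_nonneg' _) ha.le) h4
  rw [inv_mul_le_iff₀ hb] at h5
  calc _ ≤ _ := h5
    _ = _ := by ring

theorem T_bound {m n : ℕ} (A : Matrix (Fin m) (Fin n) ℝ) {K : ℝ} (hK : 0 ≤ K)
    (h : ∀ r, eucNorm (A *ᵥ r) ≤ K * eucNorm r) (s : Fin m → ℝ) :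
    eucNorm (Aᵀ *ᵥ s) ≤ K * eucNorm s := by
  have : 1 * eucNorm (Aᵀ *ᵥ s) ≤ K * eucNorm s := by
    refine le_of_sq_le' (eucNorm_nonneg' _) (mul_nonneg hK (eucNorm_nonneg' _)) ?_
    rw [one_mul, eucNorm_sq', ← dot_T]
    refine (dot_le_eucNorm _ _).trans ?_
    have := mul_le_mul_of_nonneg_left (h (Aᵀ *ᵥ s)) (eucNorm_nonneg' s)
    linarith
  simpa using this

/-- Completing the square. -/
theorem square_split (hβ : βᵀ * β = 1) (hl : ∀ i, 0 < l i) (r : Fin d → ℝ) (g : Fin k → ℝ) :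
    (r - β *ᵥ g) ⬝ᵥ (Di l *ᵥ (r - β *ᵥ g)) =
      (AA β l *ᵥ r - g) ⬝ᵥ (GG β l *ᵥ (AA β l *ᵥ r - g)) + r ⬝ᵥ (MM β l *ᵥ r) := by
  set y := AA β l *ᵥ r with hy
  have hGy : GG β l *ᵥ y = βᵀ *ᵥ (Di l *ᵥ r) := by
    rw [hy, Matrix.mulVec_mulVec, GG_mul_AA hβ hl, Matrix.mulVec_mulVec]
  have hG : ∀ u : Fin k → ℝ, GG β l *ᵥ u = βᵀ *ᵥ (Di l *ᵥ (β *ᵥ u)) := by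
    intro u; simp [GG, Matrix.mulVec_mulVec, Matrix.mul_assoc]
  have hM : MM β l *ᵥ r = Di l *ᵥ r - Di l *ᵥ (β *ᵥ y) := by
    simp [MM, Matrix.sub_mulVec, Matrix.mulVec_mulVec, hy, Matrix.mul_assoc]
  have e1 : ∀ u : Fin k → ℝ, ∀ v, (β *ᵥ u) ⬝ᵥ v = u ⬝ᵥ βᵀ *ᵥ v := by
    intro u v; rw [dot_T, Matrix.transpose_transpose]
  have e2 : ∀ u : Fin k → ℝ, r ⬝ᵥ Di l *ᵥ (β *ᵥ u) = u ⬝ᵥ GG β l *ᵥ y := by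
    intro u; rw [dot_T, Di_T, dotProduct_comm, e1, hGy]
  have e3 : y ⬝ᵥ GG β l *ᵥ g = g ⬝ᵥ GG β l *ᵥ y := by
    rw [dot_T, GG_T, dotProduct_comm]
  simp only [Matrix.mulVec_sub, dotProduct_sub, sub_dotProduct, hM, e2, e1, ← hG, ← hGy, e3]
  ring

end LA

/-! ### Analysis -/

/-- bilinear form of a matrix. -/
def bil {n : ℕ} (M : Matrix (Fin n) (Fin n) ℝ) : (Fin n → ℝ) →L[ℝ] (Fin n → ℝ) →L[ℝ] ℝ :=
  LinearMap.toContinuousBilinearMap (Matrix.toLinearMap₂' ℝ M)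

theorem bil_apply {n : ℕ} (M : Matrix (Fin n) (Fin n) ℝ) (x y : Fin n → ℝ) :
    bil M x y = x ⬝ᵥ M *ᵥ y := by
  simp [bil, LinearMap.toContinuousBilinearMap_apply, Matrix.toLinearMap₂'_apply']

theorem hasFDerivAt_quad {n : ℕ} {M : Matrix (Fin n) (Fin n) ℝ} (hM : Mᵀ = M) (c x : Fin n → ℝ) :
    HasFDerivAt (fun x => (x - c) ⬝ᵥ M *ᵥ (x - c)) ((2 : ℝ) • bil M (x - c)) x := by
  have h : HasFDerivAt (fun x : Fin n → ℝ => x - c) (ContinuousLinearMap.id ℝ _) x :=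
    (hasFDerivAt_id x).sub_const c
  have h2 := (bil M).hasFDerivAt_of_bilinear h h
  simp only [bil_apply] at h2
  refine h2.congr_fderiv ?_
  ext v
  simp [bil_apply, two_mul]
  have sym : ∀ u w : Fin n → ℝ, u ⬝ᵥ M *ᵥ w = w ⬝ᵥ M *ᵥ u := fun u w => by
    rw [dot_T, hM, dotProduct_comm]
  rw [sym v x, sym v c]

section fac
variable {k : ℕ} {G : Matrix (Fin k) (Fin k) ℝ} {p : (Fin k → ℝ) → ℝ}

theorem fac_integrable (hG : G.PosDef) (hp : Integrable p) (α : ℝ) (y : Fin k → ℝ) :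
    Integrable (fun f : Fin k → ℝ =>
      Real.exp (-((y - α • f) ⬝ᵥ (G *ᵥ (y - α • f))) / 2) * p f) := by
  have hc : Continuous fun f : Fin k → ℝ =>
      Real.exp (-((y - α • f) ⬝ᵥ (G *ᵥ (y - α • f))) / 2) := by
    simp only [← bil_apply]; fun_prop
  refine hp.bdd_mul (c := 1) hc.aestronglyMeasurable (Filter.Eventually.of_forall fun f => ?_)
  rw [Real.norm_eq_abs, Real.abs_exp, Real.exp_le_one_iff]
  have := hG.posSemidef.dotProduct_mulVec_nonneg (y - α • f)
  simp only [star_trivial] at this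
  linarith

theorem fac_pos (hG : G.PosDef) (hp0 : ∀ f, 0 ≤ p f) (hp1 : ∫ f, p f = 1)
    (hp : Integrable p) (α : ℝ) (y : Fin k → ℝ) :
    0 < ∫ f : Fin k → ℝ, Real.exp (-((y - α • f) ⬝ᵥ (G *ᵥ (y - α • f))) / 2) * p f := by
  rw [integral_pos_iff_support_of_nonneg (fun f => mul_nonneg (Real.exp_pos _).le (hp0 f))
    (fac_integrable hG hp α y)]
  have : 0 < ∫ f, p f := by rw [hp1]; exact one_pos
  rw [integral_pos_iff_support_of_nonneg hp0 hp] at this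
  convert this using 2
  ext f
  simp [Real.exp_ne_zero]

theorem fac_diff (hG : G.PosDef) (hGT : Gᵀ = G) (hp0 : ∀ f, 0 ≤ p f)
    (hp : Integrable p) (hpm : Integrable fun f : Fin k → ℝ => eucNorm f ^ 2 * p f)
    (hpc : Continuous p) (α : ℝ) :
    Differentiable ℝ fun y : Fin k → ℝ =>
      ∫ f : Fin k → ℝ, Real.exp (-((y - α • f) ⬝ᵥ (G *ᵥ (y - α • f))) / 2) * p f := by
  intro y₀
  let F' : (Fin k → ℝ) → (Fin k → ℝ) → ((Fin k → ℝ) →L[ℝ] ℝ) := fun y f =>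
    -(Real.exp (-((y - α • f) ⬝ᵥ (G *ᵥ (y - α • f))) / 2) * p f) • bil G (y - α • f)
  have hF'c : Continuous (F' y₀) := by
    simp only [F', ← bil_apply]; fun_prop
  refine (hasFDerivAt_integral_of_dominated_of_fderiv_le (F' := F')
    (bound := fun f => (‖bil G‖ * (‖y₀‖ + 1 + |α|)) * p f + (‖bil G‖ * |α|) * (eucNorm f ^ 2 * p f))
    (Metric.ball_mem_nhds y₀ one_pos)
    (Filter.Eventually.of_forall fun y => (fac_integrable hG hp α y).aestronglyMeasurable)
    (fac_integrable hG hp α y₀) hF'c.aestronglyMeasurable ?_ ?_ ?_).differentiableAt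
  · refine Filter.Eventually.of_forall fun f y hy => ?_
    have hq := hG.posSemidef.dotProduct_mulVec_nonneg (y - α • f)
    simp only [star_trivial] at hq
    have h1 : Real.exp (-((y - α • f) ⬝ᵥ (G *ᵥ (y - α • f))) / 2) ≤ 1 := by
      rw [Real.exp_le_one_iff]; linarith
    have hy1 : ‖y‖ ≤ ‖y₀‖ + 1 := by
      have := norm_sub_norm_le y y₀
      rw [Metric.mem_ball, dist_eq_norm] at hy
      linarith
    have hf1 : ‖f‖ ≤ 1 + eucNorm f ^ 2 := by
      nlinarith [norm_le_eucNorm f, sq_nonneg (eucNorm f - 1), eucNorm_nonneg' f]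
    have h2 : ‖y - α • f‖ ≤ (‖y₀‖ + 1) + |α| * (1 + eucNorm f ^ 2) := by
      refine (norm_sub_le _ _).trans (add_le_add hy1 ?_)
      rw [norm_smul, Real.norm_eq_abs]
      exact mul_le_mul_of_nonneg_left hf1 (abs_nonneg _)
    have h3 : ‖bil G (y - α • f)‖ ≤ ‖bil G‖ * ((‖y₀‖ + 1) + |α| * (1 + eucNorm f ^ 2)) :=
      ((bil G).le_opNorm _).trans (mul_le_mul_of_nonneg_left h2 (norm_nonneg _))
    simp only [F']
    rw [norm_smul, norm_neg, norm_mul, Real.norm_eq_abs, Real.abs_exp, Real.norm_eq_abs,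
      abs_of_nonneg (hp0 f)]
    calc _ ≤ (1 * p f) * (‖bil G‖ * ((‖y₀‖ + 1) + |α| * (1 + eucNorm f ^ 2))) :=
          mul_le_mul (mul_le_mul_of_nonneg_right h1 (hp0 f)) h3 (norm_nonneg _)
            (by simpa using hp0 f)
      _ = _ := by ring
  · exact (hp.const_mul _).add (hpm.const_mul _)
  · refine Filter.Eventually.of_forall fun f y _ => ?_
    have h := ((hasFDerivAt_quad hGT (α • f) y).const_mul (-1 / 2 : ℝ)).exp.mul_const (p f)
    refine (h.congr_fderiv ?_).congr_of_eventuallyEq (Filter.Eventually.of_forall fun z => ?_)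
    · ext v
      have e : ∀ z : ℝ, -1 / 2 * z = -z / 2 := fun z => by ring
      simp [F', e]
      ring
    · simp only []
      congr 2; ring

end fac

/-- Lipschitz subspace score implies Lipschitz full score. -/
theorem lipschitz_subspace_score_implies_lipschitz_score
    (d k : ℕ) (hk1 : 1 ≤ k) (hkd : k ≤ d)
    (β : Matrix (Fin d) (Fin k) ℝ) (hβ : βᵀ * β = 1)
    (pfac : (Fin k → ℝ) → ℝ)
    (hpfac_nonneg : ∀ f, 0 ≤ pfac f)
    (hpfac_prob : (∫ f : Fin k → ℝ, pfac f) = 1)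
    (hpfac_smooth : ContDiff ℝ 2 pfac)
    (hpfac_mom : Integrable (fun f : Fin k → ℝ => eucNorm f ^ 2 * pfac f))
    (σ : Fin d → ℝ) (σmax : ℝ)
    (hσpos : ∀ i, 0 < σ i)
    (hσdec : ∀ i j : Fin d, i ≤ j → σ j ≤ σ i)
    (hσmax : ∀ i, σ i ≤ σmax)
    (t : ℝ) (htnn : 0 ≤ t)
    (L : ℝ)
    (hlip : ∀ y₁ y₂ : Fin k → ℝ,
      eucNorm (gradv (fun y => Real.log (pTfac β σ pfac t y)) y₁
          - gradv (fun y => Real.log (pTfac β σ pfac t y)) y₂)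
        ≤ L * eucNorm (y₁ - y₂)) :
    ∀ r₁ r₂ : Fin d → ℝ,
      eucNorm (gradv (fun r => Real.log (pT β σ pfac t r)) r₁
          - gradv (fun r => Real.log (pT β σ pfac t r)) r₂)
        ≤ (L * ((hf t + σ ⟨0, by omega⟩ ^ 2 * af t ^ 2)
                  / (hf t + σ ⟨d - 1, by omega⟩ ^ 2 * af t ^ 2)) ^ 2
            + 1 / (hf t + σ ⟨d - 1, by omega⟩ ^ 2 * af t ^ 2)) * eucNorm (r₁ - r₂) := by
  have hd : 0 < d := by omega
  set l : Fin d → ℝ := fun i => hf t + σ i ^ 2 * af t ^ 2 with hldef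
  set a := hf t + σ ⟨d - 1, by omega⟩ ^ 2 * af t ^ 2 with hadef
  set b := hf t + σ ⟨0, by omega⟩ ^ 2 * af t ^ 2 with hbdef
  have haf : 0 < af t := Real.exp_pos _
  have haf1 : af t ≤ 1 := by rw [af, Real.exp_le_one_iff]; linarith
  have hhf : 0 ≤ hf t := by rw [hf]; nlinarith
  have hlpos : ∀ i, 0 < l i := fun i => by
    have := hσpos i
    simp only [hldef]; positivity
  have ha : 0 < a := hlpos _
  have hb : 0 < b := hlpos _
  have hal : ∀ i, a ≤ l i := fun i => by
    have h1 := hσdec i ⟨d - 1, by omega⟩ (by rw [Fin.le_def]; simp only []; omega)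
    have h2 := (hσpos ⟨d - 1, by omega⟩).le
    simp only [hldef, hadef]; gcongr
  have hlb : ∀ i, l i ≤ b := fun i => by
    have h1 := hσdec ⟨0, by omega⟩ i (by rw [Fin.le_def]; simp only []; omega)
    have h2 := (hσpos i).le
    simp only [hldef, hbdef]; gcongr
  -- matrices
  have hLam : Lam σ t = Matrix.diagonal l := rfl
  have hLi : (Lam σ t)⁻¹ = Di l := by
    rw [hLam]; exact Matrix.inv_eq_right_inv (D_mul_Di hlpos)
  have hGam : Gam β σ t = (GG β l)⁻¹ := by rw [Gam, hLi, GG]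
  have hGi : (Gam β σ t)⁻¹ = GG β l := by
    rw [hGam, Matrix.nonsing_inv_nonsing_inv _ (GG_unit hβ hlpos)]
  have hGpd := GG_posDef hβ hlpos
  have hdetG : 0 < (Gam β σ t).det := by rw [hGam]; exact hGpd.inv.det_pos
  have hdetL : 0 < (Lam σ t).det := by
    rw [hLam]; exact (Matrix.PosDef.diagonal hlpos).det_pos
  have hpint : Integrable pfac := by
    by_contra h
    rw [integral_undef h] at hpfac_prob
    exact zero_ne_one hpfac_prob
  set cd : ℝ := (2 * Real.pi) ^ (-(d : ℝ) / 2) * (Lam σ t).det ^ (-(1 : ℝ) / 2) with hcd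
  set ck : ℝ := (2 * Real.pi) ^ (-(k : ℝ) / 2) * (Gam β σ t).det ^ (-(1 : ℝ) / 2) with hck
  have hcdp : 0 < cd := by positivity
  have hckp : 0 < ck := by positivity
  set I : (Fin k → ℝ) → ℝ := fun y => ∫ f : Fin k → ℝ,
    Real.exp (-((y - af t • f) ⬝ᵥ (GG β l *ᵥ (y - af t • f))) / 2) * pfac f with hI
  have hIpos : ∀ y, 0 < I y := fac_pos hGpd hpfac_nonneg hpfac_prob hpint (af t)
  have hIdiff : Differentiable ℝ I :=
    fac_diff hGpd GG_T hpfac_nonneg hpint hpfac_mom hpfac_smooth.continuous (af t)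
  have hfacI : ∀ y, pTfac β σ pfac t y = ck * I y := fun y => by
    simp only [pTfac, gaussD, hGi, hI, ← integral_const_mul, ← hck, mul_assoc]
  have hTI : ∀ r, pT β σ pfac t r =
      cd * Real.exp (-(r ⬝ᵥ MM β l *ᵥ r) / 2) * I (AA β l *ᵥ r) := fun r => by
    simp only [pT, gaussD, hLi, hI, ← integral_const_mul, ← hcd]
    congr 1
    ext f
    rw [← Matrix.mulVec_smul, square_split hβ hlpos, neg_add, add_div, Real.exp_add]
    ring
  have hlogfac : (fun y => Real.log (pTfac β σ pfac t y)) =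
      fun y => Real.log ck + Real.log (I y) := by
    ext y; rw [hfacI, Real.log_mul hckp.ne' (hIpos y).ne']
  have hlogT : (fun r => Real.log (pT β σ pfac t r)) =
      fun r => Real.log cd + (-1 / 2 : ℝ) * ((r - 0) ⬝ᵥ MM β l *ᵥ (r - 0))
        + Real.log (I (AA β l *ᵥ r)) := by
    ext r
    rw [hTI, Real.log_mul (by positivity) (hIpos _).ne', Real.log_mul hcdp.ne' (Real.exp_pos _).ne',
      Real.log_exp, sub_zero]
    ring
  set s : (Fin k → ℝ) → (Fin k → ℝ) := gradv (fun y => Real.log (pTfac β σ pfac t y)) with hs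
  have hlogI : ∀ y, HasFDerivAt (fun y => Real.log (I y))
      (fderiv ℝ (fun y => Real.log (pTfac β σ pfac t y)) y) y := fun y => by
    have h : DifferentiableAt ℝ (fun y => Real.log (I y)) y := (hIdiff y).log (hIpos y).ne'
    rw [hlogfac, fderiv_const_add]
    exact h.hasFDerivAt
  have hscore : ∀ r, gradv (fun r => Real.log (pT β σ pfac t r)) r =
      (AA β l)ᵀ *ᵥ s (AA β l *ᵥ r) - MM β l *ᵥ r := by
    intro r
    have hA : HasFDerivAt (fun r => AA β l *ᵥ r)
        (LinearMap.toContinuousLinearMap (Matrix.mulVecLin (AA β l))) r :=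
      (LinearMap.toContinuousLinearMap (Matrix.mulVecLin (AA β l))).hasFDerivAt
    have h := (((hasFDerivAt_quad (MM_T (β := β) (l := l)) 0 r).const_mul (-1 / 2 : ℝ)).const_add
      (Real.log cd)).add ((hlogI (AA β l *ᵥ r)).comp r hA)
    have h' := h.congr_of_eventuallyEq (f₁ := fun r => Real.log (pT β σ pfac t r))
      (Filter.Eventually.of_forall fun z => congrFun hlogT z)
    ext i
    rw [gradv, h'.fderiv]
    have e1 : fderiv ℝ (fun y => Real.log (pTfac β σ pfac t y)) (AA β l *ᵥ r)
        (AA β l *ᵥ Pi.single i 1) = ((AA β l)ᵀ *ᵥ s (AA β l *ᵥ r)) i := by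
      have e : AA β l *ᵥ Pi.single i 1 = ∑ j, AA β l j i • (Pi.single j 1 : Fin k → ℝ) := by
        ext m
        simp [Finset.sum_apply, Pi.single_apply]
      rw [e, map_sum]
      simp only [map_smul, smul_eq_mul, Matrix.mulVec, dotProduct, Matrix.transpose_apply, hs, gradv]
    have e2 : bil (MM β l) (r - 0) (Pi.single i 1) = (MM β l *ᵥ r) i := by
      rw [bil_apply, dot_T, MM_T]; simp
    simp only [_root_.add_apply, _root_.smul_apply,
      ContinuousLinearMap.comp_apply, LinearMap.coe_toContinuousLinearMap', Matrix.mulVecLin_apply,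
      e1, e2, Pi.sub_apply, smul_eq_mul]
    ring
  have hL : 0 ≤ L := by
    have h := (eucNorm_nonneg' _).trans (hlip (Pi.single ⟨0, hk1⟩ 1) 0)
    have h1 : 0 < eucNorm ((Pi.single ⟨0, hk1⟩ 1 : Fin k → ℝ) - 0) := by
      refine lt_of_lt_of_le ?_ (norm_le_eucNorm _)
      simp
    exact nonneg_of_mul_nonneg_left h h1
  intro r₁ r₂
  rw [hscore, hscore]
  have hAb := AA_bound hβ ha hal hb hlb
  have hK : 0 ≤ b / a := by positivity
  have key : (AA β l)ᵀ *ᵥ s (AA β l *ᵥ r₁) - MM β l *ᵥ r₁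
      - ((AA β l)ᵀ *ᵥ s (AA β l *ᵥ r₂) - MM β l *ᵥ r₂) =
      (AA β l)ᵀ *ᵥ (s (AA β l *ᵥ r₁) - s (AA β l *ᵥ r₂)) - MM β l *ᵥ (r₁ - r₂) := by
    rw [Matrix.mulVec_sub, Matrix.mulVec_sub]; abel
  rw [key, add_mul]
  refine (eucNorm_sub_le _ _).trans (add_le_add ?_ ?_)
  · calc _ ≤ b / a * eucNorm (s (AA β l *ᵥ r₁) - s (AA β l *ᵥ r₂)) := T_bound _ hK hAb _
      _ ≤ b / a * (L * (b / a * eucNorm (r₁ - r₂))) := by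
        refine mul_le_mul_of_nonneg_left ((hlip _ _).trans ?_) hK
        rw [← Matrix.mulVec_sub]
        exact mul_le_mul_of_nonneg_left (hAb _) hL
      _ = _ := by ring
  · rw [one_div, le_inv_mul_iff₀ ha]
    exact MM_bound hβ hlpos hal _
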